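/- arXiv:2404.17916 — 2 statements merged into one kernel-verified Lean document; each statement's English description precedes it below -/
import Mathlib

section
/- Let E be a real Hilbert space, f : E → ℝ differentiable with L-Lipschitz gradient ∇f (L ≥ 0), θ ∈ E, η ≥ 0, and (Ω, μ) a probability space. Let g : Ω → E be Bochner-integrable with ∫ g dμ = ∇f(θ), with ω ↦ ‖g ω‖² integrable and ∫ ‖g ω − ∇f(θ)‖² dμ ≤ σ² for some σ ≥ 0, and assume ω ↦ f(θ − η·g ω) is integrable. Then ∫ f(θ − η·g ω) dμ(ω) ≤ f(θ) − (η − L·η²/2)·‖∇f(θ)‖² + (L·η²/2)·σ². -/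
open MeasureTheory

/-!
Along the segment from `θ` to `θ + v`, the Lipschitz bound on the gradient makes `f` minus its
tangent parabola of curvature `L * ‖v‖ ^ 2` antitone, which gives the quadratic upper bound
`f (θ + v) ≤ f θ + ⟪∇f θ, v⟫ + L / 2 * ‖v‖ ^ 2`. Substituting the random step `v = -η • g` and
integrating, unbiasedness turns the linear term into `-η * ‖∇f θ‖ ^ 2`, while the second moment of
`g` in the quadratic term is its variance plus `‖∇f θ‖ ^ 2`.
-/

open scoped RealInnerProductSpace

section QuadraticUpperBound

theorem le_quadratic_of_hasDerivWithinAt_Icc {φ φ' : ℝ → ℝ} {K a b : ℝ} (hab : a ≤ b)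
    (hφ : ∀ t ∈ Set.Icc a b, HasDerivWithinAt φ (φ' t) (Set.Icc a b) t)
    (hφ' : ∀ t ∈ Set.Ioo a b, φ' t - φ' a ≤ K * (t - a)) :
    φ b ≤ φ a + φ' a * (b - a) + K / 2 * (b - a) ^ 2 := by
  let q : ℝ → ℝ := fun t => φ' a * (t - a) + K / 2 * (t - a) ^ 2
  let q' : ℝ → ℝ := fun t => φ' a + K * (t - a)
  have hq (t : ℝ) : HasDerivAt q (q' t) t := by
    have hid : HasDerivAt (fun t : ℝ => t - a) 1 t := (hasDerivAt_id t).sub_const a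
    refine ((hid.const_mul (φ' a)).add ((hid.pow 2).const_mul (K / 2))).congr_deriv ?_
    simp only [q']
    ring
  have hgap : ∀ t ∈ Set.Icc a b,
      HasDerivWithinAt (fun t => φ t - q t) (φ' t - q' t) (Set.Icc a b) t :=
    fun t ht => (hφ t ht).sub (hq t).hasDerivWithinAt
  have hgap_nonpos : ∀ t ∈ interior (Set.Icc a b), φ' t - q' t ≤ 0 := by
    intro t ht
    rw [interior_Icc] at ht
    linarith [hφ' t ht]
  have hanti : AntitoneOn (fun t => φ t - q t) (Set.Icc a b) :=
    antitoneOn_of_hasDerivWithinAt_nonpos (convex_Icc a b)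
      (fun t ht => (hgap t ht).continuousWithinAt)
      (fun t ht => (hgap t (interior_subset ht)).mono interior_subset) hgap_nonpos
  have hend : φ b - q b ≤ φ a - q a :=
    hanti (Set.left_mem_Icc.2 hab) (Set.right_mem_Icc.2 hab) hab
  simp only [q] at hend
  linarith

theorem le_quadratic_of_hasFDerivWithinAt_segment {E : Type*} [NormedAddCommGroup E]
    [NormedSpace ℝ E] {f : E → ℝ} {f' : E → E →L[ℝ] ℝ} {L : ℝ} {x y : E}
    (hf : ∀ z ∈ segment ℝ x y, HasFDerivWithinAt f (f' z) (segment ℝ x y) z)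
    (hf' : ∀ z ∈ segment ℝ x y, (f' z - f' x) (z - x) ≤ L * ‖z - x‖ ^ 2) :
    f y ≤ f x + f' x (y - x) + L / 2 * ‖y - x‖ ^ 2 := by
  let γ : ℝ → E := AffineMap.lineMap x y
  have hγ_mem : Set.MapsTo γ (Set.Icc 0 1) (segment ℝ x y) := fun _ ht =>
    lineMap_mem_segment ℝ x y ht
  have hγ_zero : γ 0 = x := AffineMap.lineMap_apply_zero x y
  have hγ_one : γ 1 = y := AffineMap.lineMap_apply_one x y
  have hγ_sub (t : ℝ) : γ t - x = t • (y - x) := by simp [γ, AffineMap.lineMap_apply]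
  have hderiv : ∀ t ∈ Set.Icc (0 : ℝ) 1,
      HasDerivWithinAt (f ∘ γ) (f' (γ t) (y - x)) (Set.Icc 0 1) t := fun t ht =>
    (hf _ (hγ_mem ht)).comp_hasDerivWithinAt t AffineMap.hasDerivWithinAt_lineMap hγ_mem
  have hslope : ∀ t ∈ Set.Ioo (0 : ℝ) 1,
      f' (γ t) (y - x) - f' (γ 0) (y - x) ≤ L * ‖y - x‖ ^ 2 * (t - 0) := by
    intro t ht
    have h := hf' _ (hγ_mem (Set.Ioo_subset_Icc_self ht))
    rw [hγ_sub, map_smul, smul_eq_mul, sub_apply, norm_smul, Real.norm_of_nonneg ht.1.le] at h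
    rw [hγ_zero]
    refine le_of_mul_le_mul_left ?_ ht.1
    linarith
  have h := le_quadratic_of_hasDerivWithinAt_Icc zero_le_one hderiv hslope
  simp only [Function.comp_apply, hγ_zero, hγ_one] at h
  linarith

theorem real_inner_le_mul_norm_sq_of_norm_le {E : Type*} [SeminormedAddCommGroup E]
    [InnerProductSpace ℝ E] {u v : E} {L : ℝ} (h : ‖u‖ ≤ L * ‖v‖) : ⟪u, v⟫ ≤ L * ‖v‖ ^ 2 :=
  calc ⟪u, v⟫ ≤ ‖u‖ * ‖v‖ := real_inner_le_norm u v
    _ ≤ L * ‖v‖ * ‖v‖ := by gcongr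
    _ = L * ‖v‖ ^ 2 := by ring

end QuadraticUpperBound

section SecondMoment

variable {E : Type*} [NormedAddCommGroup E] [InnerProductSpace ℝ E]
  {Ω : Type*} [MeasurableSpace Ω] {μ : Measure Ω} {X : Ω → E}

theorem integrable_quadratic [IsFiniteMeasure μ] (a : ℝ) (p : E) (c : ℝ) (hX : MemLp X 2 μ) :
    Integrable (fun ω => a + ⟪p, X ω⟫ + c * ‖X ω‖ ^ 2) μ :=
  ((integrable_const a).add ((hX.integrable one_le_two).const_inner p)).add
    ((hX.integrable_norm_pow two_ne_zero).const_mul c)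

variable [CompleteSpace E] [IsProbabilityMeasure μ]

theorem integral_quadratic (a : ℝ) (p : E) (c : ℝ) (hX : MemLp X 2 μ) :
    ∫ ω, (a + ⟪p, X ω⟫ + c * ‖X ω‖ ^ 2) ∂μ =
      a + ⟪p, ∫ ω, X ω ∂μ⟫ + c * ∫ ω, ‖X ω‖ ^ 2 ∂μ := by
  have hX_int : Integrable X μ := hX.integrable one_le_two
  have h_inner : Integrable (fun ω => ⟪p, X ω⟫) μ := hX_int.const_inner p
  have h_affine : Integrable (fun ω => a + ⟪p, X ω⟫) μ := (integrable_const a).add h_inner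
  have h_sq : Integrable (fun ω => c * ‖X ω‖ ^ 2) μ :=
    (hX.integrable_norm_pow two_ne_zero).const_mul c
  rw [integral_add h_affine h_sq, integral_add (integrable_const a) h_inner,
    integral_inner hX_int, integral_const_mul, integral_const, probReal_univ, one_smul]

theorem integral_norm_sub_integral_sq (hX : MemLp X 2 μ) :
    ∫ ω, ‖X ω - ∫ ω', X ω' ∂μ‖ ^ 2 ∂μ = ∫ ω, ‖X ω‖ ^ 2 ∂μ - ‖∫ ω, X ω ∂μ‖ ^ 2 := by
  set m := ∫ ω, X ω ∂μ
  have hexpand (ω : Ω) : ‖X ω - m‖ ^ 2 = ‖m‖ ^ 2 + ⟪(-2 : ℝ) • m, X ω⟫ + 1 * ‖X ω‖ ^ 2 := by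
    rw [norm_sub_sq_real, real_inner_smul_left, real_inner_comm]
    ring
  simp_rw [hexpand]
  rw [integral_quadratic _ _ _ hX, real_inner_smul_left, real_inner_self_eq_norm_sq]
  ring

theorem integral_le_of_le_quadratic {f : E → ℝ} {x p : E} {c : ℝ}
    (hf : ∀ v, f (x + v) ≤ f x + ⟪p, v⟫ + c * ‖v‖ ^ 2)
    (hX : MemLp X 2 μ) (hfX : Integrable (fun ω => f (x + X ω)) μ) :
    ∫ ω, f (x + X ω) ∂μ ≤ f x + ⟪p, ∫ ω, X ω ∂μ⟫ + c * ∫ ω, ‖X ω‖ ^ 2 ∂μ :=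
  (integral_mono hfX (integrable_quadratic _ _ _ hX) fun ω => hf (X ω)).trans_eq
    (integral_quadratic _ _ _ hX)

end SecondMoment

theorem sgd_one_step_expected_descent_general
    {E : Type*} [NormedAddCommGroup E] [InnerProductSpace ℝ E] [CompleteSpace E]
    {Ω : Type*} [MeasurableSpace Ω] {μ : Measure Ω} [IsProbabilityMeasure μ]
    {f : E → ℝ} {f' : E → E} {L : ℝ} {θ : E}
    (hdiff : ∀ x, HasGradientAt f (f' x) x)
    (hlip : ∀ x, ⟪f' x - f' θ, x - θ⟫ ≤ L * ‖x - θ‖ ^ 2)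
    (η : ℝ) {g : Ω → E} (hg : MemLp g 2 μ) (hmean : ∫ ω, g ω ∂μ = f' θ)
    (hfint : Integrable (fun ω => f (θ - η • g ω)) μ) :
    ∫ ω, f (θ - η • g ω) ∂μ ≤
      f θ - (η - L * η ^ 2 / 2) * ‖f' θ‖ ^ 2 + L * η ^ 2 / 2 * ∫ ω, ‖g ω - f' θ‖ ^ 2 ∂μ := by
  have hquad (v : E) : f (θ + v) ≤ f θ + ⟪f' θ, v⟫ + L / 2 * ‖v‖ ^ 2 := by
    have h := le_quadratic_of_hasFDerivWithinAt_segment (x := θ) (y := θ + v)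
      (fun z _ => (hdiff z).hasFDerivAt.hasFDerivWithinAt)
      (fun z _ => by simpa [inner_sub_left] using hlip z)
    rwa [add_sub_cancel_left, InnerProductSpace.toDual_apply_apply] at h
  have hvar : ∫ ω, ‖g ω - f' θ‖ ^ 2 ∂μ = ∫ ω, ‖g ω‖ ^ 2 ∂μ - ‖f' θ‖ ^ 2 := by
    simpa only [hmean] using integral_norm_sub_integral_sq hg
  have hstep (ω : Ω) : θ - η • g ω = θ + (-η) • g ω := by rw [neg_smul, sub_eq_add_neg]
  simp_rw [hstep] at hfint ⊢
  calc ∫ ω, f (θ + (-η) • g ω) ∂μ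
      ≤ f θ + ⟪f' θ, ∫ ω, (-η) • g ω ∂μ⟫ + L / 2 * ∫ ω, ‖(-η) • g ω‖ ^ 2 ∂μ :=
        integral_le_of_le_quadratic hquad (hg.const_smul (-η)) hfint
    _ = f θ - η * ‖f' θ‖ ^ 2 + L / 2 * (η ^ 2 * ∫ ω, ‖g ω‖ ^ 2 ∂μ) := by
        simp_rw [integral_smul, hmean, inner_smul_right, real_inner_self_eq_norm_sq, norm_smul,
          mul_pow, integral_const_mul, norm_neg, Real.norm_eq_abs, sq_abs]
        ring
    _ = f θ - (η - L * η ^ 2 / 2) * ‖f' θ‖ ^ 2 + L * η ^ 2 / 2 * ∫ ω, ‖g ω - f' θ‖ ^ 2 ∂μ := by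
        rw [hvar]
        ring

/-- One-step case of the paper's Lemma 1: one SGD step with an unbiased stochastic
gradient of bounded variance decreases the expected loss up to the stated error terms. -/
theorem sgd_one_step_expected_descent
    {E : Type*} [NormedAddCommGroup E] [InnerProductSpace ℝ E] [CompleteSpace E]
    {Ω : Type*} [MeasurableSpace Ω] (μ : Measure Ω) [IsProbabilityMeasure μ]
    (f : E → ℝ) (f' : E → E) (L : ℝ) (hL : 0 ≤ L)
    (hdiff : ∀ x : E, HasGradientAt f (f' x) x)
    (hlip : ∀ x y : E, ‖f' x - f' y‖ ≤ L * ‖x - y‖)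
    (θ : E) (η : ℝ) (hη : 0 ≤ η)
    (g : Ω → E) (hg : Integrable g μ)
    (hmean : ∫ ω, g ω ∂μ = f' θ)
    (hg2 : Integrable (fun ω => ‖g ω‖ ^ 2) μ)
    (σ : ℝ) (hσ : 0 ≤ σ)
    (hvar : ∫ ω, ‖g ω - f' θ‖ ^ 2 ∂μ ≤ σ ^ 2)
    (hfint : Integrable (fun ω => f (θ - η • g ω)) μ) :
    ∫ ω, f (θ - η • g ω) ∂μ ≤
      f θ - (η - L * η ^ 2 / 2) * ‖f' θ‖ ^ 2 + (L * η ^ 2 / 2) * σ ^ 2 := by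
  have hlipθ (x : E) := real_inner_le_mul_norm_sq_of_norm_le (hlip x θ)
  have hgL2 : MemLp g 2 μ := (memLp_two_iff_integrable_sq_norm hg.1).2 hg2
  exact (sgd_one_step_expected_descent_general hdiff hlipθ η hgL2 hmean hfint).trans (by gcongr)
end

section
/- Let E be a real Hilbert space, f : E → ℝ differentiable with L-Lipschitz gradient ∇f (L ≥ 0), η ≥ 0, σ ≥ 0, and R ≥ 1 a natural number. Let (Ω, μ) be a probability space and G : E × Ω → E a measurable stochastic-gradient oracle such that for every θ ∈ E, ω ↦ G(θ, ω) is Bochner-integrable with ∫ G(θ, ω) dμ(ω) = ∇f(θ) and ∫ ‖G(θ, ω) − ∇f(θ)‖² dμ(ω) ≤ σ². On the product probability space (Ω^R, μ^⊗R) define iterates Θ_0(ω) = θ₀ and Θ_{r+1}(ω) = Θ_r(ω) − η·G(Θ_r(ω), ω_r) for r = 0,…,R−1, and assume all functions ω ↦ f(Θ_r(ω)), ω ↦ ‖∇f(Θ_r(ω))‖², ω ↦ ‖G(Θ_r(ω), ω_r)‖² are integrable with respect to μ^⊗R. Then ∫ f(Θ_R) dμ^⊗R ≤ f(θ₀) −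 (η − L·η²/2)·∑_{r=0}^{R−1} ∫ ‖∇f(Θ_r)‖² dμ^⊗R + R·L·η²·σ²/2. -/
open MeasureTheory

/-!
By Taylor's formula `f (θ - η • g) ≤ f θ - η * ⟪∇f θ, g⟫ + L / 2 * η ^ 2 * ‖g‖ ^ 2`. Taking the
expectation over a stochastic gradient `g` with mean `∇f θ` and variance at most `σ ^ 2` gives the
one-step bound, since the second moment of `g` is its variance plus `‖∇f θ‖ ^ 2`. As the `r`-th
iterate depends only on the samples before the `r`-th one, Fubini's theorem lets us apply this bound
conditionally on the iterate, and the resulting one-step bounds telescope.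
-/

section Taylor

theorem norm_sub_sub_fderiv_le_of_starConvex {V W : Type*} [NormedAddCommGroup V]
    [NormedSpace ℝ V] [NormedAddCommGroup W] [NormedSpace ℝ W] {f : V → W} {f' : V → V →L[ℝ] W}
    {L : ℝ} {s : Set V} {x y : V} (hs : StarConvex ℝ x s)
    (hdiff : ∀ z ∈ s, HasFDerivWithinAt f (f' z) s z)
    (hlip : ∀ z ∈ s, ‖f' z - f' x‖ ≤ L * ‖z - x‖) (hy : y ∈ s) :
    ‖f y - f x - f' x (y - x)‖ ≤ L / 2 * ‖y - x‖ ^ 2 := by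
  have mem_line {t : ℝ} (ht : t ∈ Set.Icc (0 : ℝ) 1) : x + t • (y - x) ∈ s :=
    hs.add_smul_sub_mem hy ht.1 ht.2
  have hline (t : ℝ) : HasDerivAt (fun t : ℝ => x + t • (y - x)) (y - x) t := by
    simpa using ((hasDerivAt_id t).smul_const (y - x)).const_add x
  have hremainder {t : ℝ} (ht : t ∈ Set.Icc (0 : ℝ) 1) :
      HasDerivWithinAt (fun t : ℝ => f (x + t • (y - x)) - f x - t • f' x (y - x))
        ((f' (x + t • (y - x)) - f' x) (y - x)) (Set.Icc 0 1) t := by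
    have hcomp := (hdiff _ (mem_line ht)).comp_hasDerivWithinAt t (hline t).hasDerivWithinAt
      fun _ => mem_line
    simpa using! (hcomp.sub_const (f x)).sub
      ((hasDerivAt_id t).smul_const (f' x (y - x))).hasDerivWithinAt
  have hbound {t : ℝ} (ht : t ∈ Set.Ico (0 : ℝ) 1) :
      ‖(f' (x + t • (y - x)) - f' x) (y - x)‖ ≤ L * ‖y - x‖ ^ 2 * t :=
    calc ‖(f' (x + t • (y - x)) - f' x) (y - x)‖
        ≤ ‖f' (x + t • (y - x)) - f' x‖ * ‖y - x‖ := ContinuousLinearMap.le_opNorm _ _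
      _ ≤ L * ‖x + t • (y - x) - x‖ * ‖y - x‖ := by
        gcongr
        exact hlip _ (mem_line ⟨ht.1, ht.2.le⟩)
      _ = L * ‖y - x‖ ^ 2 * t := by
        rw [add_sub_cancel_left, norm_smul, Real.norm_of_nonneg ht.1]
        ring
  have hquadratic (t : ℝ) :
      HasDerivAt (fun t : ℝ => L / 2 * ‖y - x‖ ^ 2 * t ^ 2) (L * ‖y - x‖ ^ 2 * t) t :=
    ((hasDerivAt_pow 2 t).const_mul (L / 2 * ‖y - x‖ ^ 2)).congr_deriv (by push_cast; ring)
  simpa using image_norm_le_of_norm_deriv_right_le_deriv_boundary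
    (fun t ht => (hremainder ht).continuousWithinAt)
    (fun t ht => (hremainder ⟨ht.1, ht.2.le⟩).mono_of_mem_nhdsWithin (Icc_mem_nhdsGE_of_mem ht))
    (by simp) hquadratic (fun t ht => hbound ht) (Set.right_mem_Icc.2 zero_le_one)

variable {E : Type*} [NormedAddCommGroup E] [InnerProductSpace ℝ E] [CompleteSpace E]
  {f : E → ℝ} {f' : E → E} {L : ℝ}

theorem abs_sub_sub_inner_gradient_le (hdiff : ∀ x, HasGradientAt f (f' x) x)
    (hlip : ∀ x y, ‖f' x - f' y‖ ≤ L * ‖x - y‖) (x y : E) :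
    |f y - f x - inner ℝ (f' x) (y - x)| ≤ L / 2 * ‖y - x‖ ^ 2 := by
  refine norm_sub_sub_fderiv_le_of_starConvex (f' := fun z => InnerProductSpace.toDual ℝ E (f' z))
    (starConvex_univ x) (fun z _ => (hdiff z).hasFDerivAt.hasFDerivWithinAt) (fun z _ => ?_)
    (Set.mem_univ y)
  rw [← map_sub, LinearIsometryEquiv.norm_map]
  exact hlip z x

end Taylor

section SecondMoment

variable {E : Type*} [NormedAddCommGroup E] [InnerProductSpace ℝ E] [CompleteSpace E]
  {Ω : Type*} [MeasurableSpace Ω] {μ : Measure Ω}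

theorem integral_norm_sq_eq_add_integral_norm_sub_sq [IsProbabilityMeasure μ] {g : Ω → E}
    (hg : MemLp g 2 μ) :
    ∫ ω, ‖g ω‖ ^ 2 ∂μ = ‖∫ ω, g ω ∂μ‖ ^ 2 + ∫ ω, ‖g ω - ∫ ω', g ω' ∂μ‖ ^ 2 ∂μ := by
  set m := ∫ ω, g ω ∂μ with hm
  have hg₁ : Integrable g μ := hg.integrable one_le_two
  have hexpand (ω : Ω) : ‖g ω‖ ^ 2 = ‖g ω - m‖ ^ 2 + 2 * inner ℝ m (g ω) - ‖m‖ ^ 2 := by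
    rw [norm_sub_sq_real, real_inner_comm]
    ring
  have hvar : Integrable (fun ω => ‖g ω - m‖ ^ 2) μ := (hg.sub (memLp_const m)).integrable_norm_pow'
  have hinner : Integrable (fun ω => 2 * inner ℝ m (g ω)) μ := (hg₁.const_inner m).const_mul 2
  have hsum : Integrable (fun ω => ‖g ω - m‖ ^ 2 + 2 * inner ℝ m (g ω)) μ := hvar.add hinner
  simp_rw [hexpand]
  rw [integral_sub hsum (integrable_const _), integral_add hvar hinner,
    integral_const_mul, integral_inner hg₁, ← hm, real_inner_self_eq_norm_sq, integral_const,
    probReal_univ, one_smul]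
  ring

variable {f : E → ℝ} {f' : E → E} {L : ℝ}

theorem integrable_comp_of_gradient_lipschitz [IsFiniteMeasure μ]
    (hdiff : ∀ x, HasGradientAt f (f' x) x) (hlip : ∀ x y, ‖f' x - f' y‖ ≤ L * ‖x - y‖)
    {X : Ω → E} (hX : MemLp X 2 μ) : Integrable (fun ω => f (X ω)) μ := by
  have hf : Continuous f :=
    continuous_iff_continuousAt.2 fun x => (hdiff x).hasFDerivAt.continuousAt
  have hlinear : Integrable (fun ω => f 0 + inner ℝ (f' 0) (X ω)) μ :=
    (integrable_const _).add ((hX.integrable one_le_two).const_inner _)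
  have hremainder : Integrable (fun ω => f (X ω) - (f 0 + inner ℝ (f' 0) (X ω))) μ := by
    refine (hX.integrable_norm_pow'.const_mul (L / 2)).mono'
      ((hf.comp_aestronglyMeasurable hX.1).sub hlinear.1) (.of_forall fun ω => ?_)
    simpa [sub_sub] using abs_sub_sub_inner_gradient_le hdiff hlip 0 (X ω)
  exact (hremainder.add hlinear).congr (.of_forall fun ω => by simp)

end SecondMoment

section Step

variable {E : Type*} [NormedAddCommGroup E] [InnerProductSpace ℝ E] [CompleteSpace E]
  {f : E → ℝ} {f' : E → E} {L σ : ℝ}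

theorem integral_comp_sub_smul_le {Ω : Type*} [MeasurableSpace Ω] {μ : Measure Ω}
    [IsProbabilityMeasure μ] (hL : 0 ≤ L) (hdiff : ∀ x, HasGradientAt f (f' x) x)
    (hlip : ∀ x y, ‖f' x - f' y‖ ≤ L * ‖x - y‖) {θ : E} {g : Ω → E} (hg : MemLp g 2 μ)
    (hmean : ∫ ω, g ω ∂μ = f' θ) (hvar : ∫ ω, ‖g ω - f' θ‖ ^ 2 ∂μ ≤ σ ^ 2) (η : ℝ) :
    ∫ ω, f (θ - η • g ω) ∂μ ≤
      f θ - (η - L * η ^ 2 / 2) * ‖f' θ‖ ^ 2 + L * η ^ 2 * σ ^ 2 / 2 := by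
  have htaylor (ω : Ω) : f (θ - η • g ω) ≤
      f θ - η * inner ℝ (f' θ) (g ω) + L * η ^ 2 / 2 * ‖g ω‖ ^ 2 := by
    have hrem := (le_abs_self _).trans
      (abs_sub_sub_inner_gradient_le hdiff hlip θ (θ - η • g ω))
    rw [sub_sub_cancel_left, inner_neg_right, inner_smul_right, norm_neg, norm_smul, mul_pow,
      Real.norm_eq_abs, sq_abs] at hrem
    linarith
  have hleft : Integrable (fun ω => f (θ - η • g ω)) μ :=
    integrable_comp_of_gradient_lipschitz hdiff hlip ((memLp_const θ).sub (hg.const_smul η))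
  have hg₁ : Integrable g μ := hg.integrable one_le_two
  have hinner : Integrable (fun ω => η * inner ℝ (f' θ) (g ω)) μ :=
    (hg₁.const_inner _).const_mul η
  have hlinear : Integrable (fun ω => f θ - η * inner ℝ (f' θ) (g ω)) μ :=
    (integrable_const _).sub hinner
  have hsquare : Integrable (fun ω => L * η ^ 2 / 2 * ‖g ω‖ ^ 2) μ :=
    hg.integrable_norm_pow'.const_mul _
  calc ∫ ω, f (θ - η • g ω) ∂μ
      ≤ ∫ ω, (f θ - η * inner ℝ (f' θ) (g ω) + L * η ^ 2 / 2 * ‖g ω‖ ^ 2) ∂μ :=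
        integral_mono hleft (hlinear.add hsquare) htaylor
    _ = f θ - η * ‖f' θ‖ ^ 2 + L * η ^ 2 / 2 * ∫ ω, ‖g ω‖ ^ 2 ∂μ := by
        rw [integral_add hlinear hsquare, integral_sub (integrable_const _) hinner,
          integral_const_mul, integral_const_mul, integral_inner hg₁, hmean,
          real_inner_self_eq_norm_sq, integral_const, probReal_univ, one_smul]
    _ = f θ - η * ‖f' θ‖ ^ 2 +
          L * η ^ 2 / 2 * (‖f' θ‖ ^ 2 + ∫ ω, ‖g ω - f' θ‖ ^ 2 ∂μ) := by
        rw [integral_norm_sq_eq_add_integral_norm_sub_sq hg, hmean]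
    _ ≤ f θ - η * ‖f' θ‖ ^ 2 + L * η ^ 2 / 2 * (‖f' θ‖ ^ 2 + σ ^ 2) := by gcongr
    _ = f θ - (η - L * η ^ 2 / 2) * ‖f' θ‖ ^ 2 + L * η ^ 2 * σ ^ 2 / 2 := by ring

theorem integral_prod_comp_sub_smul_le {Ω Ω' : Type*} [MeasurableSpace Ω] [MeasurableSpace Ω']
    {μ : Measure Ω} [IsProbabilityMeasure μ] {ν : Measure Ω'} [IsProbabilityMeasure ν]
    (hL : 0 ≤ L) (hdiff : ∀ x, HasGradientAt f (f' x) x)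
    (hlip : ∀ x y, ‖f' x - f' y‖ ≤ L * ‖x - y‖) {X : Ω' → E} {g : Ω' → Ω → E}
    (hg : ∀ᵐ ω ∂ν, MemLp (g ω) 2 μ) (hmean : ∀ᵐ ω ∂ν, ∫ x, g ω x ∂μ = f' (X ω))
    (hvar : ∀ᵐ ω ∂ν, ∫ x, ‖g ω x - f' (X ω)‖ ^ 2 ∂μ ≤ σ ^ 2) (η : ℝ)
    (hfX : Integrable (fun ω => f (X ω)) ν) (hf'X : Integrable (fun ω => ‖f' (X ω)‖ ^ 2) ν)
    (hstep : Integrable (fun p : Ω' × Ω => f (X p.1 - η • g p.1 p.2)) (ν.prod μ)) :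
    ∫ p, f (X p.1 - η • g p.1 p.2) ∂(ν.prod μ) ≤
      ∫ ω, f (X ω) ∂ν - (η - L * η ^ 2 / 2) * ∫ ω, ‖f' (X ω)‖ ^ 2 ∂ν +
        L * η ^ 2 * σ ^ 2 / 2 := by
  have hgrad : Integrable (fun ω => (η - L * η ^ 2 / 2) * ‖f' (X ω)‖ ^ 2) ν := hf'X.const_mul _
  have hdecrease : Integrable (fun ω => f (X ω) - (η - L * η ^ 2 / 2) * ‖f' (X ω)‖ ^ 2) ν :=
    hfX.sub hgrad
  calc ∫ p, f (X p.1 - η • g p.1 p.2) ∂(ν.prod μ)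
      = ∫ ω, ∫ x, f (X ω - η • g ω x) ∂μ ∂ν := integral_prod _ hstep
    _ ≤ ∫ ω, (f (X ω) - (η - L * η ^ 2 / 2) * ‖f' (X ω)‖ ^ 2 + L * η ^ 2 * σ ^ 2 / 2) ∂ν := by
        refine integral_mono_ae hstep.integral_prod_left (hdecrease.add (integrable_const _)) ?_
        filter_upwards [hg, hmean, hvar] with ω hgω hmeanω hvarω
        exact integral_comp_sub_smul_le hL hdiff hlip hgω hmeanω hvarω η
    _ = _ := by
        rw [integral_add hdecrease (integrable_const _), integral_sub hfX hgrad,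
          integral_const_mul, integral_const, probReal_univ, one_smul]

end Step

section Resampling

variable {ι : Type*} [Fintype ι] {Ω : ι → Type*} [∀ i, MeasurableSpace (Ω i)]
  (μ : ∀ i, Measure (Ω i))

theorem measurePreserving_update_pi [DecidableEq ι] [∀ i, SigmaFinite (μ i)] (r : ι)
    [IsProbabilityMeasure (μ r)] :
    MeasurePreserving (fun p : (∀ i, Ω i) × Ω r => Function.update p.1 r p.2)
      ((Measure.pi μ).prod (μ r)) (Measure.pi μ) := by
  have hmeas : Measurable fun p : (∀ i, Ω i) × Ω r => Function.update p.1 r p.2 :=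
    measurable_update'
  refine ⟨hmeas, (Measure.pi_eq fun s hs => ?_).symm⟩
  have hpreimage : (fun p : (∀ i, Ω i) × Ω r => Function.update p.1 r p.2) ⁻¹' Set.univ.pi s =
      Set.univ.pi (Function.update s r Set.univ) ×ˢ s r := by
    ext ⟨ω, x⟩
    grind
  have hfactors : (fun i => μ i (Function.update s r Set.univ i)) =
      Function.update (fun i => μ i (s i)) r 1 := by
    ext i
    obtain rfl | hi := eq_or_ne i r <;> simp [*]
  rw [Measure.map_apply hmeas (.univ_pi hs), hpreimage, Measure.prod_prod, Measure.pi_pi, hfactors,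
    Finset.prod_update_of_mem (Finset.mem_univ r), one_mul, mul_comm,
    ← Finset.prod_eq_mul_prod_sdiff_singleton_of_mem (Finset.mem_univ r) fun i => μ i (s i)]

variable {E : Type*} [NormedAddCommGroup E] [InnerProductSpace ℝ E] [CompleteSpace E]
  {f : E → ℝ} {f' : E → E} {L σ : ℝ}

theorem integral_pi_comp_sub_smul_le [∀ i, IsProbabilityMeasure (μ i)] (hL : 0 ≤ L)
    (hdiff : ∀ x, HasGradientAt f (f' x) x) (hlip : ∀ x y, ‖f' x - f' y‖ ≤ L * ‖x - y‖) {r : ι}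
    {X : (∀ i, Ω i) → E} (hX : DependsOn X {r}ᶜ) {G : E → Ω r → E}
    (hG : ∀ θ, Integrable (G θ) (μ r)) (hmean : ∀ θ, ∫ x, G θ x ∂(μ r) = f' θ)
    (hvar : ∀ θ, ∫ x, ‖G θ x - f' θ‖ ^ 2 ∂(μ r) ≤ σ ^ 2) (η : ℝ)
    (hfX : Integrable (fun ω => f (X ω)) (Measure.pi μ))
    (hf'X : Integrable (fun ω => ‖f' (X ω)‖ ^ 2) (Measure.pi μ))
    (hGX : Integrable (fun ω => ‖G (X ω) (ω r)‖ ^ 2) (Measure.pi μ))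
    (hstep : Integrable (fun ω => f (X ω - η • G (X ω) (ω r))) (Measure.pi μ)) :
    ∫ ω, f (X ω - η • G (X ω) (ω r)) ∂(Measure.pi μ) ≤
      ∫ ω, f (X ω) ∂(Measure.pi μ) -
          (η - L * η ^ 2 / 2) * ∫ ω, ‖f' (X ω)‖ ^ 2 ∂(Measure.pi μ) +
        L * η ^ 2 * σ ^ 2 / 2 := by
  classical
  have hupdate (ω : ∀ i, Ω i) (x : Ω r) : X (Function.update ω r x) = X ω :=
    hX fun i hi => Function.update_of_ne hi x ω
  have hpres := measurePreserving_update_pi μ r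
  have hstep' : Integrable (fun p : (∀ i, Ω i) × Ω r => f (X p.1 - η • G (X p.1) p.2))
      ((Measure.pi μ).prod (μ r)) := by
    simpa [Function.comp_def, hupdate] using hpres.integrable_comp_of_integrable hstep
  have hGX' : Integrable (fun p : (∀ i, Ω i) × Ω r => ‖G (X p.1) p.2‖ ^ 2)
      ((Measure.pi μ).prod (μ r)) := by
    simpa [Function.comp_def, hupdate] using hpres.integrable_comp_of_integrable hGX
  have hmemLp : ∀ᵐ ω ∂(Measure.pi μ), MemLp (G (X ω)) 2 (μ r) := by
    filter_upwards [hGX'.prod_right_ae] with ω hω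
    exact (memLp_two_iff_integrable_sq_norm (hG (X ω)).1).2 hω
  have hresample : ∫ ω, f (X ω - η • G (X ω) (ω r)) ∂(Measure.pi μ) =
      ∫ p, f (X p.1 - η • G (X p.1) p.2) ∂((Measure.pi μ).prod (μ r)) := by
    have hmap := integral_map hpres.measurable.aemeasurable (hpres.map_eq.symm ▸ hstep.1)
    simpa [hpres.map_eq, hupdate] using hmap
  rw [hresample]
  exact integral_prod_comp_sub_smul_le hL hdiff hlip hmemLp (.of_forall fun ω => hmean (X ω))
    (.of_forall fun ω => hvar (X ω)) η hfX hf'X hstep'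

end Resampling

theorem dependsOn_iterate_of_step {R : ℕ} {Ω : Fin R → Type*} {α : Type*}
    {step : ∀ r : Fin R, α → Ω r → α} {Θ : ℕ → (∀ r, Ω r) → α} {θ₀ : α}
    (hΘ0 : ∀ ω, Θ 0 ω = θ₀) (hΘstep : ∀ (r : Fin R) ω, Θ (r + 1) ω = step r (Θ r ω) (ω r))
    {k : ℕ} (hk : k ≤ R) : DependsOn (Θ k) {i | (i : ℕ) < k} := by
  induction k with
  | zero => intro ω ω' _; rw [hΘ0, hΘ0]
  | succ k ih =>
    intro ω ω' hagree
    rw [hΘstep ⟨k, hk⟩ ω, hΘstep ⟨k, hk⟩ ω', hagree ⟨k, hk⟩ k.lt_succ_self,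
      ih (Nat.le_of_succ_le hk) fun i hi => hagree i (Nat.lt_succ_of_lt hi)]

theorem sgd_multi_step_expected_descent_general
    {E : Type*} [NormedAddCommGroup E] [InnerProductSpace ℝ E] [CompleteSpace E]
    {R : ℕ} {Ω : Fin R → Type*} [∀ r, MeasurableSpace (Ω r)] (μ : ∀ r, Measure (Ω r))
    [∀ r, IsProbabilityMeasure (μ r)] {f : E → ℝ} {f' : E → E} {L : ℝ} (hL : 0 ≤ L)
    (hdiff : ∀ x, HasGradientAt f (f' x) x) (hlip : ∀ x y, ‖f' x - f' y‖ ≤ L * ‖x - y‖)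
    (η σ : Fin R → ℝ) {G : ∀ r, E → Ω r → E} (hG : ∀ r θ, Integrable (G r θ) (μ r))
    (hmean : ∀ r θ, ∫ x, G r θ x ∂(μ r) = f' θ)
    (hvar : ∀ r θ, ∫ x, ‖G r θ x - f' θ‖ ^ 2 ∂(μ r) ≤ σ r ^ 2)
    {θ₀ : E} {Θ : ℕ → (∀ r, Ω r) → E} (hΘ0 : ∀ ω, Θ 0 ω = θ₀)
    (hΘstep : ∀ (r : Fin R) ω, Θ (r + 1) ω = Θ r ω - η r • G r (Θ r ω) (ω r))
    (hfint : ∀ r ≤ R, Integrable (fun ω => f (Θ r ω)) (Measure.pi μ))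
    (hgradint : ∀ r : Fin R, Integrable (fun ω => ‖f' (Θ r ω)‖ ^ 2) (Measure.pi μ))
    (hGint : ∀ r : Fin R, Integrable (fun ω => ‖G r (Θ r ω) (ω r)‖ ^ 2) (Measure.pi μ)) :
    ∫ ω, f (Θ R ω) ∂(Measure.pi μ) ≤
      f θ₀ - ∑ r : Fin R, (η r - L * η r ^ 2 / 2) * ∫ ω, ‖f' (Θ r ω)‖ ^ 2 ∂(Measure.pi μ) +
        ∑ r : Fin R, L * η r ^ 2 * σ r ^ 2 / 2 := by
  let loss (k : ℕ) : ℝ := ∫ ω, f (Θ k ω) ∂(Measure.pi μ)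
  have hloss0 : loss 0 = f θ₀ := by simp [loss, hΘ0]
  have hdepends (r : Fin R) : DependsOn (Θ r) {r}ᶜ :=
    (dependsOn_iterate_of_step (step := fun r θ x => θ - η r • G r θ x) hΘ0 hΘstep r.2.le).mono
      fun i hi => by simpa using (Fin.lt_def.2 hi).ne
  have hdescent (r : Fin R) : loss (r + 1) - loss r ≤
      L * η r ^ 2 * σ r ^ 2 / 2 -
        (η r - L * η r ^ 2 / 2) * ∫ ω, ‖f' (Θ r ω)‖ ^ 2 ∂(Measure.pi μ) := by
    have hnext := hfint (r + 1) r.2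
    simp only [hΘstep] at hnext
    have hstep := integral_pi_comp_sub_smul_le μ hL hdiff hlip (hdepends r) (hG r) (hmean r)
      (hvar r) (η r) (hfint r r.2.le) (hgradint r) (hGint r) hnext
    simp only [loss, hΘstep]
    linarith
  have htelescope : ∑ r : Fin R, (loss (r + 1) - loss r) = loss R - loss 0 := by
    rw [Fin.sum_univ_eq_sum_range fun k => loss (k + 1) - loss k, Finset.sum_range_sub]
  have hsum := Finset.sum_le_sum fun r (_ : r ∈ Finset.univ) => hdescent r
  rw [htelescope, Finset.sum_sub_distrib, hloss0] at hsum
  linarith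

/-- The paper's Lemma 1 (Bounded Multi-Step Training Loss): after `R` local SGD epochs
with learning rate `η`, using an unbiased stochastic-gradient oracle with variance
bounded by `σ²`, the expected loss satisfies
`E[f(Θ_R)] ≤ f θ₀ - (η - Lη²/2) ∑_{r<R} E[‖∇f(Θ_r)‖²] + R L η² σ² / 2`. -/
theorem sgd_multi_step_expected_descent
    {E : Type*} [NormedAddCommGroup E] [InnerProductSpace ℝ E] [CompleteSpace E]
    [MeasurableSpace E] [BorelSpace E]
    {Ω : Type*} [MeasurableSpace Ω] (μ : Measure Ω) [IsProbabilityMeasure μ]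
    (f : E → ℝ) (f' : E → E) (L : ℝ) (hL : 0 ≤ L)
    (hdiff : ∀ x : E, HasGradientAt f (f' x) x)
    (hlip : ∀ x y : E, ‖f' x - f' y‖ ≤ L * ‖x - y‖)
    (η σ : ℝ) (hη : 0 ≤ η) (hσ : 0 ≤ σ)
    (R : ℕ) (hR : 1 ≤ R)
    (G : E × Ω → E) (hGmeas : Measurable G)
    (hGmean : ∀ θ : E, Integrable (fun ω => G (θ, ω)) μ ∧ ∫ ω, G (θ, ω) ∂μ = f' θ)
    (hGvar : ∀ θ : E, ∫ ω, ‖G (θ, ω) - f' θ‖ ^ 2 ∂μ ≤ σ ^ 2)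
    (θ₀ : E) (Θ : ℕ → (Fin R → Ω) → E)
    (hΘ0 : ∀ ω, Θ 0 ω = θ₀)
    (hΘstep : ∀ (r : Fin R) (ω : Fin R → Ω),
      Θ (r + 1) ω = Θ r ω - η • G (Θ r ω, ω r))
    (hfint : ∀ r : ℕ, r ≤ R →
      Integrable (fun ω => f (Θ r ω)) (Measure.pi fun _ : Fin R => μ))
    (hgradint : ∀ r : Fin R,
      Integrable (fun ω => ‖f' (Θ r ω)‖ ^ 2) (Measure.pi fun _ : Fin R => μ))
    (hGint : ∀ r : Fin R,
      Integrable (fun ω => ‖G (Θ r ω, ω r)‖ ^ 2) (Measure.pi fun _ : Fin R => μ)) :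
    ∫ ω, f (Θ R ω) ∂(Measure.pi fun _ : Fin R => μ) ≤
      f θ₀ -
        (η - L * η ^ 2 / 2) *
          ∑ r ∈ Finset.range R,
            ∫ ω, ‖f' (Θ r ω)‖ ^ 2 ∂(Measure.pi fun _ : Fin R => μ) +
        R * L * η ^ 2 * σ ^ 2 / 2 := by
  simpa [Finset.sum_range, Finset.mul_sum, mul_assoc, mul_div_assoc] using
    sgd_multi_step_expected_descent_general (fun _ => μ) hL hdiff hlip (fun _ => η) (fun _ => σ)
      (G := fun _ θ x => G (θ, x)) (fun _ θ => (hGmean θ).1) (fun _ θ => (hGmean θ).2)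
      (fun _ => hGvar) hΘ0 hΘstep hfint hgradint hGint
end
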